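/- Let C be a field, G a group, H a normal subgroup of G, and V a simple (irreducible) module over the group algebra C[G]. Suppose W ⊆ V is a C[H]-submodule that is simple as a C[H]-module, and suppose that for every g ∈ G with g ∉ H, the C[H]-submodule g·W of V is not isomorphic to W as a C[H]-module. Then the natural C[G]-linear map C[G] ⊗_{C[H]} W → V, x ⊗ w ↦ x·w, is an isomorphism. -/

import Mathlib

open TensorProduct

/-- The submodule of relations defining the induced module
`C[G] ⊗_{C[H]} W = (C[G] ⊗_C W) / ⟨(x·h) ⊗ w − x ⊗ (h·w)⟩`, where `W` is an `H`-stable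
`C`-subspace of a `G`-representation `(V, ρ)`. -/
noncomputable def clifRel (C : Type*) [Field C] (G : Type*) [Group G] (H : Subgroup G)
    (V : Type*) [AddCommGroup V] [Module C V] (ρ : Representation C G V)
    (W : Submodule C V) (hstab : ∀ h ∈ H, ∀ v ∈ W, ρ h v ∈ W) :
    Submodule (MonoidAlgebra C G) (MonoidAlgebra C G ⊗[C] ↥W) :=
  Submodule.span (MonoidAlgebra C G)
    {t | ∃ (x : MonoidAlgebra C G) (h : G) (hh : h ∈ H) (v : V) (hv : v ∈ W),
      t = (x * MonoidAlgebra.of C G h) ⊗ₜ[C] (⟨v, hv⟩ : W)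
            - x ⊗ₜ[C] (⟨ρ h v, hstab h hh v hv⟩ : W)}

/-!
Let `T` run through the translates `g • W`, one for each coset `gH`. Each `T` is again stable under
`H` and simple, because translation by `g` is an automorphism of the lattice of `H`-stable
subspaces. If `g • W ≅ g' • W` over `H`, translating by `g⁻¹` gives `W ≅ g⁻¹g' • W`, so the
translates attached to distinct cosets are pairwise non-isomorphic, and their sum in `V` is direct.
The induced module is the sum of the images of the maps `w ↦ g ⊗ w`, one for each coset, and the
natural map sends the summand of `gH` onto `g • W`; so it is injective, and its image is the
`C[G]`-span of `W`.
-/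

section SimpleModules

theorem span_eq_top_of_nontrivial {R M : Type*} [Ring R] [AddCommGroup M] [Module R M]
    [IsSimpleModule R M] {s : Set M} (hs : s.Nontrivial) : Submodule.span R s = ⊤ :=
  have ⟨x, hxs, hx⟩ := hs.exists_ne 0
  (eq_bot_or_eq_top _).resolve_left fun hbot ↦ hx (Submodule.span_eq_bot.mp hbot x hxs)

theorem iSupIndep_of_isSimpleModule_of_isEmpty_linearEquiv {R M ι : Type*} [Ring R]
    [AddCommGroup M] [Module R M] (N : ι → Submodule R M) [∀ i, IsSimpleModule R (N i)]
    (hN : Pairwise fun i j ↦ IsEmpty (N i ≃ₗ[R] N j)) : iSupIndep N := by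
  intro i
  refine (isSimpleModule_iff_isAtom.mp inferInstance).not_le_iff_disjoint.mp fun hle ↦ ?_
  have (m : {m | ∃ j ≠ i, N j = m}) : IsSimpleModule R m.1 := by
    obtain ⟨_, j, -, rfl⟩ := m
    infer_instance
  have hle' : N i ≤ sSup {m | ∃ j ≠ i, N j = m} :=
    hle.trans (iSup₂_le fun j hj ↦ le_sSup ⟨j, hj, rfl⟩)
  obtain ⟨_, ⟨j, hji, rfl⟩, ⟨e⟩⟩ := (N i).linearEquiv_of_le_sSup _ hle'
  exact (hN hji.symm).false e

theorem injective_finsupp_lsum_of_iSupIndep {R M N ι : Type*} [Ring R] [AddCommGroup M]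
    [Module R M] [AddCommGroup N] [Module R N] (f : ι → M →ₗ[R] N)
    (hf : ∀ i, Function.Injective (f i)) (hind : iSupIndep fun i ↦ LinearMap.range (f i)) :
    Function.Injective (Finsupp.lsum ℕ f) := by
  rw [injective_iff_map_eq_zero]
  intro x hx
  rw [iSupIndep_iff_finsetSum_eq_zero_imp_eq_zero] at hind
  have hzero := hind x.support (fun i ↦ f i (x i)) (fun i _ ↦ LinearMap.mem_range_self _ _) hx
  ext i
  by_contra hi
  exact hi ((map_eq_zero_iff _ (hf i)).mp (hzero i (Finsupp.mem_support_iff.mpr hi)))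

end SimpleModules

section Subrepresentations

variable {k G V : Type*} [CommSemiring k] [Monoid G] [AddCommMonoid V] [Module k V]
  {ρ : Representation k G V}

/-- The inclusion of a subrepresentation, as a `k[G]`-linear map. -/
noncomputable def asModuleSubtype (σ : Subrepresentation ρ) :
    σ.toRepresentation.asModule →ₗ[MonoidAlgebra k G] ρ.asModule :=
  Representation.IntertwiningMap.equivLinearMapAsModule σ.toRepresentation ρ
    { toLinearMap := σ.toSubmodule.subtype
      isIntertwining' := fun _ ↦ rfl }

theorem asModuleSubtype_injective (σ : Subrepresentation ρ) :
    Function.Injective (asModuleSubtype σ) :=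
  Subtype.val_injective

theorem range_asModuleSubtype (σ : Subrepresentation ρ) :
    LinearMap.range (asModuleSubtype σ) = σ.asSubmodule :=
  SetLike.coe_injective Subtype.range_val

/-- The `k[G]`-module of the representation `σ` is isomorphic to `σ` as a `k[G]`-submodule of
`ρ.asModule`. -/
noncomputable def asModuleEquivAsSubmodule (σ : Subrepresentation ρ) :
    σ.toRepresentation.asModule ≃ₗ[MonoidAlgebra k G] σ.asSubmodule :=
  LinearEquiv.ofInjective _ (asModuleSubtype_injective σ) ≪≫ₗ
    LinearEquiv.ofEq _ _ (range_asModuleSubtype σ)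

theorem isAtom_of_forall_invariant (σ : Subrepresentation ρ)
    [Nontrivial σ.toSubmodule] (hσ : ∀ U ≤ σ.toSubmodule,
      (∀ g, ∀ v ∈ U, ρ g v ∈ U) → U = ⊥ ∨ U = σ.toSubmodule) :
    IsAtom σ := by
  refine ⟨fun hbot ↦ ?_, fun τ hτ ↦ ?_⟩
  · exact Submodule.nontrivial_iff_ne_bot.mp ‹_› (congrArg Subrepresentation.toSubmodule hbot)
  · have hcases := hσ τ.toSubmodule hτ.le fun g v hv ↦ τ.apply_mem_toSubmodule g hv
    exact Subrepresentation.toSubmodule_injective <| hcases.resolve_right fun heq ↦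
      hτ.ne (Subrepresentation.toSubmodule_injective heq)

end Subrepresentations

section Independence

variable {k G V ι : Type*} [CommRing k] [Monoid G] [AddCommGroup V] [Module k V]
  {ρ : Representation k G V}

/-- The isomorphism of representations underlying an isomorphism of `k[G]`-modules between two
subrepresentations. -/
noncomputable def equivOfAsSubmoduleLinearEquiv {σ τ : Subrepresentation ρ}
    (e : σ.asSubmodule ≃ₗ[MonoidAlgebra k G] τ.asSubmodule) :
    σ.toRepresentation.Equiv τ.toRepresentation :=
  let e' := asModuleEquivAsSubmodule σ ≪≫ₗ e ≪≫ₗ (asModuleEquivAsSubmodule τ).symm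
  Representation.IntertwiningMap.ofBijective
    ((Representation.IntertwiningMap.equivLinearMapAsModule _ _).symm e'.toLinearMap)
    e'.bijective

theorem iSupIndep_toSubmodule_of_isAtom (σ : ι → Subrepresentation ρ) (hσ : ∀ i, IsAtom (σ i))
    (hne : Pairwise fun i j ↦
      IsEmpty ((σ i).toRepresentation.Equiv (σ j).toRepresentation)) :
    iSupIndep fun i ↦ (σ i).toSubmodule := by
  have hsimple (i) : IsSimpleModule (MonoidAlgebra k G) (σ i).asSubmodule := by
    rw [isSimpleModule_iff_isAtom]
    exact (Subrepresentation.subrepresentationSubmoduleOrderIso.isAtom_iff _).mpr (hσ i)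
  have hind : iSupIndep fun i ↦ (σ i).asSubmodule :=
    iSupIndep_of_isSimpleModule_of_isEmpty_linearEquiv _ fun i j hij ↦
      ⟨fun e ↦ (hne hij).false (equivOfAsSubmoduleLinearEquiv e)⟩
  -- Stated through finite sums, independence only involves the additive group of `V`.
  rw [iSupIndep_iff_finsetSum_eq_zero_imp_eq_zero] at hind ⊢
  exact hind

end Independence

section Translate

variable {k G V : Type*} [CommSemiring k] [Group G] [AddCommMonoid V] [Module k V]
  {H : Subgroup G} [H.Normal] {ρ : Representation k G V}

/-- The translation action of `G` on the subrepresentations of the restriction of `ρ` to a normal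
subgroup `H`: the translate `g • σ` is the image of `σ` under `ρ g`. -/
instance translateMulAction : MulAction G (Subrepresentation (ρ.comp H.subtype)) where
  smul g σ :=
    { toSubmodule := σ.toSubmodule.map (ρ g)
      apply_mem_toSubmodule := by
        rintro h _ ⟨w, hw, rfl⟩
        refine ⟨_, σ.apply_mem_toSubmodule (MulAut.conjNormal g⁻¹ h) hw, ?_⟩
        simp [mul_assoc] }
  one_smul σ := Subrepresentation.toSubmodule_injective <| by
    change σ.toSubmodule.map (ρ 1) = _
    rw [map_one, Module.End.one_eq_id, Submodule.map_id]
  mul_smul g g' σ := Subrepresentation.toSubmodule_injective <| by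
    change σ.toSubmodule.map (ρ (g * g')) = (σ.toSubmodule.map (ρ g')).map (ρ g)
    rw [map_mul, Module.End.mul_eq_comp, Submodule.map_comp]

variable {σ τ : Subrepresentation (ρ.comp H.subtype)}

theorem toSubmodule_translate (g : G) : (g • σ).toSubmodule = σ.toSubmodule.map (ρ g) := rfl

theorem translate_mono (g : G) (h : σ ≤ τ) : g • σ ≤ g • τ :=
  Submodule.map_mono (f := ρ g) h

theorem isAtom_translate (g : G) (hσ : IsAtom σ) : IsAtom (g • σ) := by
  let e : Subrepresentation (ρ.comp H.subtype) ≃o Subrepresentation (ρ.comp H.subtype) :=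
    { MulAction.toPerm g with
      map_rel_iff' := fun {σ τ} ↦
        ⟨fun h ↦ by simpa using translate_mono g⁻¹ h, translate_mono g⟩ }
  exact (e.isAtom_iff σ).mpr hσ

variable (σ) in
/-- The `k`-linear isomorphism from `σ` to its translate `g • σ` given by `ρ g`. -/
noncomputable def translateLinearEquiv (g : G) : σ.toSubmodule ≃ₗ[k] (g • σ).toSubmodule :=
  Submodule.equivMapOfInjective (ρ g) (ρ.apply_bijective g).injective σ.toSubmodule

theorem translateLinearEquiv_conjNormal (g : G) (h : H) (w : σ.toSubmodule) :
    translateLinearEquiv σ g (σ.toRepresentation (MulAut.conjNormal g⁻¹ h) w) =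
      (g • σ).toRepresentation h (translateLinearEquiv σ g w) := by
  apply Subtype.ext
  change ρ g (ρ (MulAut.conjNormal g⁻¹ h : H) w) = ρ h (ρ g w)
  simp [mul_assoc]

/-- The isomorphism `g • σ ≅ g • τ` obtained from `σ ≅ τ` by conjugating with `ρ g`. -/
noncomputable def translateEquiv (g : G) (e : σ.toRepresentation.Equiv τ.toRepresentation) :
    (g • σ).toRepresentation.Equiv (g • τ).toRepresentation :=
  .mk ((translateLinearEquiv σ g).symm ≪≫ₗ e.toLinearEquiv ≪≫ₗ translateLinearEquiv τ g) fun h ↦ by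
    refine LinearMap.ext fun v ↦ ?_
    obtain ⟨w, rfl⟩ := (translateLinearEquiv σ g).surjective v
    simp only [LinearMap.comp_apply, LinearEquiv.coe_coe, LinearEquiv.trans_apply,
      LinearEquiv.symm_apply_apply, ← translateLinearEquiv_conjNormal]
    congr 1
    exact Representation.IntertwiningMap.isIntertwining _ _ e.toIntertwiningMap _ w

theorem exists_injective_of_equiv_translate (g : G)
    (e : σ.toRepresentation.Equiv (g • σ).toRepresentation) :
    ∃ f : σ.toSubmodule →ₗ[k] V, Function.Injective f ∧
      LinearMap.range f = σ.toSubmodule.map (ρ g) ∧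
      ∀ (h : H) (w : σ.toSubmodule), f (σ.toRepresentation h w) = ρ h (f w) := by
  refine ⟨(g • σ).toSubmodule.subtype ∘ₗ e.toLinearEquiv.toLinearMap, ?_, ?_, fun h w ↦ ?_⟩
  · exact Subtype.val_injective.comp e.toLinearEquiv.injective
  · rw [LinearMap.range_comp, LinearEquiv.range, Submodule.map_top, Submodule.range_subtype,
      toSubmodule_translate]
  · exact congrArg Subtype.val
      (Representation.IntertwiningMap.isIntertwining _ _ e.toIntertwiningMap h w)

end Translate

section Clifford

variable {k G V ι : Type*} [CommRing k] [Group G] [AddCommGroup V] [Module k V]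
  {H : Subgroup G} [H.Normal] {ρ : Representation k G V}
  {σ : Subrepresentation (ρ.comp H.subtype)}

theorem iSupIndep_map_of_pairwise_not_mem (hσ : IsAtom σ)
    (hne : ∀ g ∉ H, IsEmpty (σ.toRepresentation.Equiv (g • σ).toRepresentation))
    {g : ι → G} (hg : Pairwise fun i j ↦ (g i)⁻¹ * g j ∉ H) :
    iSupIndep fun i ↦ σ.toSubmodule.map (ρ (g i)) := by
  refine iSupIndep_toSubmodule_of_isAtom (fun i ↦ g i • σ) (fun i ↦ isAtom_translate (g i) hσ)
    fun i j hij ↦ ⟨fun e ↦ (hne _ (hg hij)).false ?_⟩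
  have e' := translateEquiv (g i)⁻¹ e
  rwa [inv_smul_smul, smul_smul] at e'

end Clifford

section ActionMap

variable {k G V : Type*} [CommSemiring k] [Monoid G] [AddCommMonoid V] [Module k V]
  {ρ : Representation k G V} {W : Submodule k V}

variable (ρ W) in
/-- The action map `k[G] ⊗_k W → V`, `x ⊗ w ↦ x • w`. -/
noncomputable def actionMap : MonoidAlgebra k G ⊗[k] W →ₗ[MonoidAlgebra k G] ρ.asModule :=
  have : SMulCommClass (MonoidAlgebra k G) k ρ.asModule := IsScalarTower.to_smulCommClass'
  TensorProduct.AlgebraTensorModule.lift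
    (LinearMap.toSpanSingleton (MonoidAlgebra k G) (W →ₗ[k] ρ.asModule)
      (ρ.asModuleEquiv.symm.toLinearMap ∘ₗ W.subtype))

theorem actionMap_tmul (x : MonoidAlgebra k G) (w : W) :
    actionMap ρ W (x ⊗ₜ w) = x • ρ.asModuleEquiv.symm w := rfl

theorem range_actionMap : LinearMap.range (actionMap ρ W) =
    Submodule.span (MonoidAlgebra k G) (ρ.asModuleEquiv.symm '' W) := by
  refine le_antisymm ?_ (Submodule.span_le.mpr ?_)
  · rintro _ ⟨t, rfl⟩
    induction t with
    | zero => exact map_zero (actionMap ρ W) ▸ zero_mem _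
    | add s t hs ht => exact map_add (actionMap ρ W) s t ▸ add_mem hs ht
    | tmul x w => exact Submodule.smul_mem _ x (Submodule.subset_span ⟨w, w.2, rfl⟩)
  · rintro _ ⟨w, hw, rfl⟩
    exact ⟨1 ⊗ₜ ⟨w, hw⟩, by rw [actionMap_tmul, one_smul]⟩

end ActionMap

section Induced

variable {C G V : Type*} [Field C] [Group G] {H : Subgroup G} [AddCommGroup V] [Module C V]
  {ρ : Representation C G V} {W : Submodule C V} (hstab : ∀ h ∈ H, ∀ v ∈ W, ρ h v ∈ W)

theorem clifRel_le_ker_actionMap :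
    clifRel C G H V ρ W hstab ≤ LinearMap.ker (actionMap ρ W) := by
  refine Submodule.span_le.mpr ?_
  rintro _ ⟨x, h, hh, v, hv, rfl⟩
  rw [SetLike.mem_coe, LinearMap.mem_ker, map_sub, actionMap_tmul, actionMap_tmul,
    Representation.asModuleEquiv_symm_map_rho, mul_smul, sub_self]

theorem mkQ_mul_of_tmul (x : MonoidAlgebra C G) {h : G} (hh : h ∈ H) (w : W) :
    (clifRel C G H V ρ W hstab).mkQ ((x * MonoidAlgebra.of C G h) ⊗ₜ w) =
      (clifRel C G H V ρ W hstab).mkQ (x ⊗ₜ ⟨ρ h w, hstab h hh w w.2⟩) :=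
  (Submodule.Quotient.eq _).mpr (Submodule.subset_span ⟨x, h, hh, w, w.2, rfl⟩)

/-- The natural map `C[G] ⊗_{C[H]} W → V`, induced by `actionMap` on the quotient by `clifRel`. -/
noncomputable def inducedLift :
    ((MonoidAlgebra C G ⊗[C] W) ⧸ clifRel C G H V ρ W hstab) →ₗ[MonoidAlgebra C G] ρ.asModule :=
  (clifRel C G H V ρ W hstab).liftQ (actionMap ρ W) (clifRel_le_ker_actionMap hstab)

/-- The map `⨁_{gH} W → C[G] ⊗_{C[H]} W`, `(w_{gH}) ↦ ∑ g ⊗ w_{gH}`, the sum being over a set of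
representatives `g` of the cosets. -/
noncomputable def cosetSum :
    (G ⧸ H →₀ W) →ₗ[C] (MonoidAlgebra C G ⊗[C] W) ⧸ clifRel C G H V ρ W hstab :=
  Finsupp.lsum ℕ fun q ↦ (clifRel C G H V ρ W hstab).mkQ.restrictScalars C ∘ₗ
    TensorProduct.mk C (MonoidAlgebra C G) W (MonoidAlgebra.of C G q.out)

theorem cosetSum_single (q : G ⧸ H) (w : W) :
    cosetSum hstab (Finsupp.single q w) =
      (clifRel C G H V ρ W hstab).mkQ (MonoidAlgebra.of C G q.out ⊗ₜ w) := by
  rw [cosetSum, Finsupp.lsum_single]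
  rfl

theorem mkQ_single_tmul_mem_range_cosetSum (g : G) (c : C) (w : W) :
    (clifRel C G H V ρ W hstab).mkQ (MonoidAlgebra.single g c ⊗ₜ w) ∈
      LinearMap.range (cosetSum hstab) := by
  let g₀ : G := (g : G ⧸ H).out
  have hg : g₀⁻¹ * g ∈ H := QuotientGroup.eq.mp (QuotientGroup.out_eq' (g : G ⧸ H))
  have hsplit : MonoidAlgebra.single g c ⊗ₜ[C] w =
      (MonoidAlgebra.of C G g₀ * MonoidAlgebra.of C G (g₀⁻¹ * g)) ⊗ₜ[C] (c • w) := by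
    rw [← map_mul, mul_inv_cancel_left, TensorProduct.tmul_smul, TensorProduct.smul_tmul',
      MonoidAlgebra.smul_of]
  rw [hsplit, mkQ_mul_of_tmul hstab _ hg]
  exact ⟨_, cosetSum_single hstab _ _⟩

theorem cosetSum_surjective : Function.Surjective (cosetSum hstab) := by
  rw [← LinearMap.range_eq_top, Submodule.eq_top_iff']
  intro t
  obtain ⟨t, rfl⟩ := Submodule.mkQ_surjective _ t
  induction t with
  | zero => exact zero_mem _
  | add s t hs ht => exact map_add (clifRel C G H V ρ W hstab).mkQ s t ▸ add_mem hs ht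
  | tmul x w =>
    induction x using MonoidAlgebra.induction_linear with
    | zero => simp only [TensorProduct.zero_tmul, map_zero, zero_mem]
    | add x y hx hy => simpa only [TensorProduct.add_tmul, map_add] using add_mem hx hy
    | single g c => exact mkQ_single_tmul_mem_range_cosetSum hstab g c w

theorem inducedLift_cosetSum (f : G ⧸ H →₀ W) :
    inducedLift hstab (cosetSum hstab f) =
      ρ.asModuleEquiv.symm (Finsupp.lsum ℕ (fun q : G ⧸ H ↦ ρ q.out ∘ₗ W.subtype) f) := by
  induction f using Finsupp.induction_linear with
  | zero => simp only [map_zero]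
  | add f f' hf hf' => simp only [map_add, hf, hf']
  | single q w =>
    rw [cosetSum_single, Finsupp.lsum_single, LinearMap.comp_apply,
      Representation.asModuleEquiv_symm_map_rho]
    rfl

theorem inducedLift_injective
    (hind : iSupIndep fun q : G ⧸ H ↦ W.map (ρ q.out)) :
    Function.Injective (inducedLift hstab) := by
  have hinj : Function.Injective
      (Finsupp.lsum ℕ (fun q : G ⧸ H ↦ ρ q.out ∘ₗ W.subtype)) := by
    refine injective_finsupp_lsum_of_iSupIndep _ (fun q ↦ ?_) ?_
    · exact (ρ.apply_bijective q.out).injective.comp Subtype.val_injective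
    · simpa only [LinearMap.range_comp, Submodule.range_subtype] using hind
  refine Function.Injective.of_comp_right (g := cosetSum hstab) ?_ (cosetSum_surjective hstab)
  rw [show inducedLift hstab ∘ cosetSum hstab = _ from funext (inducedLift_cosetSum hstab)]
  exact ρ.asModuleEquiv.symm.injective.comp hinj

theorem range_inducedLift : LinearMap.range (inducedLift hstab) =
    Submodule.span (MonoidAlgebra C G) (ρ.asModuleEquiv.symm '' W) :=
  (Submodule.range_liftQ _ _ _).trans range_actionMap

end Induced

theorem stmt14_general (C : Type*) [Field C] (G : Type*) [Group G]
    (H : Subgroup G) (hH : H.Normal)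
    (V : Type*) [AddCommGroup V] [Module C V]
    (ρ : Representation C G V)
    (W : Submodule C V)
    (hstab : ∀ h ∈ H, ∀ v ∈ W, ρ h v ∈ W)
    (hWnontriv : Nontrivial W)
    (hWsimple : ∀ U : Submodule C V, U ≤ W → (∀ h ∈ H, ∀ v ∈ U, ρ h v ∈ U) →
      U = ⊥ ∨ U = W)
    (hnoniso : ∀ g : G, g ∉ H →
      ¬ ∃ e : ↥W →ₗ[C] V, Function.Injective e ∧
          LinearMap.range e = Submodule.map (ρ g) W ∧
          ∀ (h : G) (hh : h ∈ H) (v : V) (hv : v ∈ W),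
            e ⟨ρ h v, hstab h hh v hv⟩ = ρ h (e ⟨v, hv⟩)) :
    ∃ φ : ((MonoidAlgebra C G ⊗[C] ↥W) ⧸ clifRel C G H V ρ W hstab)
        →ₗ[MonoidAlgebra C G] ρ.asModule,
      (∀ (x : MonoidAlgebra C G) (v : V) (hv : v ∈ W),
        φ (Submodule.Quotient.mk (x ⊗ₜ[C] (⟨v, hv⟩ : W)))
          = x • (ρ.asModuleEquiv.symm v)) ∧
      Function.Injective φ ∧
      LinearMap.range φ = Submodule.span (MonoidAlgebra C G) (ρ.asModuleEquiv.symm '' W) := by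
  let σ : Subrepresentation (ρ.comp H.subtype) := ⟨W, fun h v hv ↦ hstab h h.2 v hv⟩
  have hσ : IsAtom σ := isAtom_of_forall_invariant σ fun U hU hUH ↦
    hWsimple U hU fun h hh ↦ hUH ⟨h, hh⟩
  have hne (g : G) (hg : g ∉ H) :
      IsEmpty (σ.toRepresentation.Equiv (g • σ).toRepresentation) := by
    refine ⟨fun e ↦ hnoniso g hg ?_⟩
    obtain ⟨f, hinj, hrange, hf⟩ := exists_injective_of_equiv_translate g e
    exact ⟨f, hinj, hrange, fun h hh v hv ↦ hf ⟨h, hh⟩ ⟨v, hv⟩⟩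
  have hind : iSupIndep fun q : G ⧸ H ↦ W.map (ρ q.out) :=
    iSupIndep_map_of_pairwise_not_mem hσ hne fun q q' hqq' hmem ↦ hqq' <| by
      simpa only [QuotientGroup.out_eq'] using QuotientGroup.eq.mpr hmem
  exact ⟨inducedLift hstab, fun _ _ _ ↦ rfl, inducedLift_injective hstab hind,
    range_inducedLift hstab⟩

/-- **Clifford theory.** Let `C` be a field, `G` a group, `H ⊴ G`, and `V` a
simple `C[G]`-module.  Suppose `W ⊆ V` is a `C[H]`-submodule that is simple over `C[H]`, and
that for every `g ∉ H` the translate `g·W` is not isomorphic to `W` as a `C[H]`-module.  Then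
the natural `C[G]`-linear map `C[G] ⊗_{C[H]} W → V`, `x ⊗ w ↦ x·w`, is an isomorphism. -/
theorem stmt14 (C : Type*) [Field C] (G : Type*) [Group G]
    (H : Subgroup G) (hH : H.Normal)
    (V : Type*) [AddCommGroup V] [Module C V]
    (ρ : Representation C G V)
    (hsimple : IsSimpleModule (MonoidAlgebra C G) ρ.asModule)
    (W : Submodule C V)
    (hstab : ∀ h ∈ H, ∀ v ∈ W, ρ h v ∈ W)
    (hWnontriv : Nontrivial W)
    (hWsimple : ∀ U : Submodule C V, U ≤ W → (∀ h ∈ H, ∀ v ∈ U, ρ h v ∈ U) →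
      U = ⊥ ∨ U = W)
    (hnoniso : ∀ g : G, g ∉ H →
      ¬ ∃ e : ↥W →ₗ[C] V, Function.Injective e ∧
          LinearMap.range e = Submodule.map (ρ g) W ∧
          ∀ (h : G) (hh : h ∈ H) (v : V) (hv : v ∈ W),
            e ⟨ρ h v, hstab h hh v hv⟩ = ρ h (e ⟨v, hv⟩)) :
    ∃ φ : ((MonoidAlgebra C G ⊗[C] ↥W) ⧸ clifRel C G H V ρ W hstab)
        →ₗ[MonoidAlgebra C G] ρ.asModule,
      (∀ (x : MonoidAlgebra C G) (v : V) (hv : v ∈ W),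
        φ (Submodule.Quotient.mk (x ⊗ₜ[C] (⟨v, hv⟩ : W)))
          = x • (ρ.asModuleEquiv.symm v)) ∧
      Function.Bijective φ := by
  obtain ⟨φ, hφ, hinj, hrange⟩ := stmt14_general C G H hH V ρ W hstab hWnontriv hWsimple hnoniso
  exact ⟨φ, hφ, hinj, LinearMap.range_eq_top.mp <| hrange.trans <| span_eq_top_of_nontrivial <|
    (Set.nontrivial_coe_sort.mp hWnontriv).image ρ.asModuleEquiv.symm.injective⟩
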